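/- Let α ∈ C(ℝⁿ;𝕊ⁿ(θ₀)) and set H(x,p) := α(x)p·p + b(x)·p, where b is Lipschitz with b(0)=0, the origin is globally asymptotically stable for Ẋ = b(X), and Ω is a bounded C¹ domain with 0 ∈ Ω and b·ν < 0 on ∂Ω. If v ∈ Lip(Ω̄) is a viscosity subsolution of H(x,Dv) = 0 in Ω, w ∈ LSC(Ω̄) is a viscosity supersolution of H(x,Dw) = 0 on all of Ω̄ (the state-constraints condition: the supersolution property holds at every point of the closure, including boundary points), and v(0) ≤ w(0), then v ≤ w on Ω̄. -/

import Mathlib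

open Set Filter Metric Topology
open scoped ENNReal

noncomputable section

/-- `n`-dimensional Euclidean space. -/
abbrev Eu (n : ℕ) := EuclideanSpace ℝ (Fin n)

variable {n : ℕ}

/-- Euclidean dot product. -/
def dotp (x y : Eu n) : ℝ := ∑ i, x i * y i

/-- The quadratic form `A p · p` of a matrix `A`. -/
def mquad (A : Matrix (Fin n) (Fin n) ℝ) (p : Eu n) : ℝ := ∑ i, ∑ j, A i j * p i * p j

/-- `A ∈ 𝕊ⁿ(θ)`: symmetric with `θ I ≤ A ≤ θ⁻¹ I`. -/
def memS (θ : ℝ) (A : Matrix (Fin n) (Fin n) ℝ) : Prop :=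
  A.IsSymm ∧ ∀ p : Eu n, θ * ‖p‖ ^ 2 ≤ mquad A p ∧ mquad A p ≤ θ⁻¹ * ‖p‖ ^ 2

/-- order of symmetric matrices (via quadratic forms). -/
def mle (A B : Matrix (Fin n) (Fin n) ℝ) : Prop := ∀ p : Eu n, mquad A p ≤ mquad B p

/-- trace of the product `A·H`. -/
def trMul (A H : Matrix (Fin n) (Fin n) ℝ) : ℝ := ∑ i, ∑ j, A i j * H j i

/-- the Pucci maximal operator associated with `𝕊ⁿ(θ)`. -/
def pucci (θ : ℝ) (X : Matrix (Fin n) (Fin n) ℝ) : ℝ :=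
  sSup ((fun A => trMul A X) '' {A | memS θ A})

/-- time derivative of `u(x,t)`. -/
def tD (u : Eu n → ℝ → ℝ) (x : Eu n) (t : ℝ) : ℝ := deriv (u x) t

/-- spatial gradient of `u(x,t)`. -/
def sG (u : Eu n → ℝ → ℝ) (x : Eu n) (t : ℝ) : Eu n := gradient (fun y => u y t) x

/-- spatial Hessian matrix of `u(x,t)`. -/
def sH (u : Eu n → ℝ → ℝ) (x : Eu n) (t : ℝ) : Matrix (Fin n) (Fin n) ℝ :=
  fun i j => fderiv ℝ (fun y => sG u y t i) x (EuclideanSpace.single j 1)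

/-- Hessian matrix of a static function. -/
def hessS (v : Eu n → ℝ) (x : Eu n) : Matrix (Fin n) (Fin n) ℝ :=
  fun i j => fderiv ℝ (fun y => gradient v y i) x (EuclideanSpace.single j 1)

/-- closed parabolic cylinder `Q̄_T = closure Ω × [0,T]` (with `T ∈ (0,∞]`). -/
def cylC (Ω : Set (Eu n)) (T : ℝ≥0∞) : Set (Eu n × ℝ) :=
  {p | p.1 ∈ closure Ω ∧ 0 ≤ p.2 ∧ ENNReal.ofReal p.2 ≤ T}

/-- open parabolic cylinder `Q_T = Ω × (0,T)`. -/
def cylO (Ω : Set (Eu n)) (T : ℝ≥0∞) : Set (Eu n × ℝ) :=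
  {p | p.1 ∈ Ω ∧ 0 < p.2 ∧ ENNReal.ofReal p.2 < T}

/-- `u ∈ C^{2,1}(Q_T)`. -/
def C21 (u : Eu n → ℝ → ℝ) (Ω : Set (Eu n)) (T : ℝ≥0∞) : Prop :=
  (∀ x ∈ Ω, ∀ t : ℝ, 0 < t → ENNReal.ofReal t < T →
     ContDiffAt ℝ 2 (fun y => u y t) x ∧ DifferentiableAt ℝ (u x) t) ∧
  ContinuousOn (fun p : Eu n × ℝ => tD u p.1 p.2) (cylO Ω T) ∧
  ContinuousOn (fun p : Eu n × ℝ => sH u p.1 p.2) (cylO Ω T)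

/-- `u ∈ C(Q̄_T) ∩ C^{2,1}(Q_T)`. -/
def Classical21 (u : Eu n → ℝ → ℝ) (Ω : Set (Eu n)) (T : ℝ≥0∞) : Prop :=
  ContinuousOn (fun p : Eu n × ℝ => u p.1 p.2) (cylC Ω T) ∧ C21 u Ω T

/-- a coefficient field in `C(Q̄_T; 𝕊ⁿ(θ))`. -/
def MatC (θ : ℝ) (A : Eu n → ℝ → Matrix (Fin n) (Fin n) ℝ) (Ω : Set (Eu n))
    (T : ℝ≥0∞) : Prop :=
  ContinuousOn (fun p : Eu n × ℝ => A p.1 p.2) (cylC Ω T) ∧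
  ∀ p ∈ cylC Ω T, memS θ (A p.1 p.2)

/-- `u` is a classical solution of `u_t = ε tr[A D²u] + b·Du` in `Q_T`. -/
def SolveL (ε : ℝ) (A : Eu n → ℝ → Matrix (Fin n) (Fin n) ℝ) (b : Eu n → Eu n)
    (u : Eu n → ℝ → ℝ) (Ω : Set (Eu n)) (T : ℝ≥0∞) : Prop :=
  ∀ x ∈ Ω, ∀ t : ℝ, 0 < t → ENNReal.ofReal t < T →
    tD u x t = ε * trMul (A x t) (sH u x t) + dotp (b x) (sG u x t)

/-- `u` is a classical subsolution of `(L)` in `Q_T`. -/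
def SubsolL (ε : ℝ) (A : Eu n → ℝ → Matrix (Fin n) (Fin n) ℝ) (b : Eu n → Eu n)
    (u : Eu n → ℝ → ℝ) (Ω : Set (Eu n)) (T : ℝ≥0∞) : Prop :=
  ∀ x ∈ Ω, ∀ t : ℝ, 0 < t → ENNReal.ofReal t < T →
    tD u x t ≤ ε * trMul (A x t) (sH u x t) + dotp (b x) (sG u x t)

/-- `u` is a classical supersolution of `(L)` in `Q_T`. -/
def SupersolL (ε : ℝ) (A : Eu n → ℝ → Matrix (Fin n) (Fin n) ℝ) (b : Eu n → Eu n)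
    (u : Eu n → ℝ → ℝ) (Ω : Set (Eu n)) (T : ℝ≥0∞) : Prop :=
  ∀ x ∈ Ω, ∀ t : ℝ, 0 < t → ENNReal.ofReal t < T →
    ε * trMul (A x t) (sH u x t) + dotp (b x) (sG u x t) ≤ tD u x t

/-- viscosity subsolution of `H(x,Du) = 0` on `A`. -/
def ViscSub (H : Eu n → Eu n → ℝ) (A : Set (Eu n)) (u : Eu n → ℝ) : Prop :=
  ∀ φ : Eu n → ℝ, ContDiff ℝ 1 φ → ∀ x ∈ A,
    IsLocalMaxOn (fun y => u y - φ y) A x → H x (gradient φ x) ≤ 0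

/-- viscosity supersolution of `H(x,Du) = 0` on `A`. -/
def ViscSup (H : Eu n → Eu n → ℝ) (A : Set (Eu n)) (u : Eu n → ℝ) : Prop :=
  ∀ φ : Eu n → ℝ, ContDiff ℝ 1 φ → ∀ x ∈ A,
    IsLocalMinOn (fun y => u y - φ y) A x → 0 ≤ H x (gradient φ x)

/-- the Hamiltonian `H_α(x,p) = α(x) p·p + b(x)·p`. -/
def Ham (α : Eu n → Matrix (Fin n) (Fin n) ℝ) (b : Eu n → Eu n) (x p : Eu n) : ℝ :=
  mquad (α x) p + dotp (b x) p

/-- the quasi-potential `V_α`: the pointwise supremum (= maximal element) of all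
Lipschitz viscosity subsolutions of `H_α(x,Du)=0` in `Ω` vanishing at the origin. -/
def Vq (α : Eu n → Matrix (Fin n) (Fin n) ℝ) (b : Eu n → Eu n) (Ω : Set (Eu n))
    (x : Eu n) : ℝ :=
  sSup {r | ∃ u : Eu n → ℝ, (∃ K : NNReal, LipschitzOnWith K u (closure Ω)) ∧
    u 0 = 0 ∧ ViscSub (Ham α b) Ω u ∧ r = u x}

/-- `M_α = min_{∂Ω} V_α`. -/
def Mq (α : Eu n → Matrix (Fin n) (Fin n) ℝ) (b : Eu n → Eu n) (Ω : Set (Eu n)) : ℝ :=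
  sInf (Vq α b Ω '' frontier Ω)

/-- `argmin (V_α | ∂Ω)`. -/
def argminV (α : Eu n → Matrix (Fin n) (Fin n) ℝ) (b : Eu n → Eu n)
    (Ω : Set (Eu n)) : Set (Eu n) :=
  {x ∈ frontier Ω | ∀ y ∈ frontier Ω, Vq α b Ω x ≤ Vq α b Ω y}

/-- `Σ_α^m = {x ∈ Ω̄ : V_α(x) ≤ m}`. -/
def SigmaM (α : Eu n → Matrix (Fin n) (Fin n) ℝ) (b : Eu n → Eu n) (Ω : Set (Eu n))
    (m : ℝ) : Set (Eu n) :=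
  {x ∈ closure Ω | Vq α b Ω x ≤ m}

/-- `Ω` is a bounded `C¹` domain with outward unit normal `ν`. -/
def IsBdC1With (Ω : Set (Eu n)) (ν : Eu n → Eu n) : Prop :=
  IsOpen Ω ∧ Bornology.IsBounded Ω ∧
  ∃ ρ : Eu n → ℝ, ContDiff ℝ 1 ρ ∧ Ω = {x | ρ x < 0} ∧
    ∀ x ∈ frontier Ω, gradient ρ x ≠ 0 ∧ ν x = ‖gradient ρ x‖⁻¹ • gradient ρ x

/-- `X` is the flow of `b`, and the origin is globally asymptotically stable. -/
def GAS (b : Eu n → Eu n) (X : ℝ → Eu n → Eu n) : Prop :=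
  (∀ x, X 0 x = x) ∧ (∀ x t, HasDerivAt (fun s => X s x) (b (X t x)) t) ∧
  (∀ x, Tendsto (fun t => X t x) atTop (nhds 0)) ∧
  (∀ ε > (0:ℝ), ∃ δ > (0:ℝ), ∀ x : Eu n, ‖x‖ < δ → ∀ t ≥ (0:ℝ), ‖X t x‖ < ε)

/-- `Ω_δ = {x ∈ Ω : dist(x,∂Ω) > δ}`. -/
def Omd (Ω : Set (Eu n)) (δ : ℝ) : Set (Eu n) := {x ∈ Ω | δ < infDist x (frontier Ω)}

/-- `Ω^Π_δ = {x ∈ Ω̄ : dist(x, ∂Ω \ Π) > δ}`. -/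
def OmPid (Ω Pset : Set (Eu n)) (δ : ℝ) : Set (Eu n) :=
  {x ∈ closure Ω | δ < infDist x (frontier Ω \ Pset)}

/-- the standing assumptions (B). -/
structure SettingB (n : ℕ) where
  Ω : Set (Eu n)
  ν : Eu n → Eu n
  g : Eu n → ℝ
  θ₀ : ℝ
  a : Eu n → ℝ → Matrix (Fin n) (Fin n) ℝ
  b : Eu n → Eu n
  b₀ : ℝ
  r₀ : ℝ
  θ₀_mem : θ₀ ∈ Set.Ioc (0 : ℝ) 1
  domain : IsBdC1With Ω ν
  zero_mem : (0 : Eu n) ∈ Ω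
  g_cont : ContinuousOn g (closure Ω)
  a_cont : ContinuousOn (fun p : Eu n × ℝ => a p.1 p.2) (closure Ω ×ˢ Set.univ)
  a_mem : ∀ x ∈ closure Ω, ∀ c : ℝ, memS θ₀ (a x c)
  b_lip : ∃ K : NNReal, LipschitzWith K b
  b_zero : b 0 = 0
  b_gas : ∃ X : ℝ → Eu n → Eu n, GAS b X
  b_inward : ∀ x ∈ frontier Ω, dotp (b x) (ν x) < 0
  b₀_pos : 0 < b₀
  r₀_pos : 0 < r₀
  ball_sub : closedBall (0 : Eu n) r₀ ⊆ Ω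
  b_coerc : ∀ x ∈ ball (0 : Eu n) r₀, dotp (b x) x ≤ -b₀ * ‖x‖ ^ 2

namespace SettingB

variable (S : SettingB n)

/-- the quasi-potential `V^c` associated with `(a(·,c), b)`. -/
def Vc (c : ℝ) : Eu n → ℝ := Vq (fun x => S.a x c) S.b S.Ω

/-- `M(c) = min_{∂Ω} V^c`. -/
def M (c : ℝ) : ℝ := sInf (S.Vc c '' frontier S.Ω)

/-- `G(c) = {g(x) : x ∈ argmin(V^c|∂Ω)}`. -/
def Gset (c : ℝ) : Set ℝ := S.g '' argminV (fun x => S.a x c) S.b S.Ω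

/-- `G⁺(c) = max G(c)`. -/
def Gp (c : ℝ) : ℝ := sSup (S.Gset c)

/-- `G⁻(c) = min G(c)`. -/
def Gm (c : ℝ) : ℝ := sInf (S.Gset c)

/-- `c₀ = g(0)`. -/
def c0 : ℝ := S.g 0

/-- `g_min = min_{Ω̄} g`. -/
def gmin : ℝ := sInf (S.g '' closure S.Ω)

/-- `g_max = max_{Ω̄} g`. -/
def gmax : ℝ := sSup (S.g '' closure S.Ω)

/-- the crossing value `c₁`. -/
def c1 : ℝ :=
  if S.c0 ≤ S.Gp S.c0 then sInf {c | S.c0 ≤ c ∧ S.Gm c ≤ c}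
  else sSup {c | c ≤ S.c0 ∧ c ≤ S.Gp c}

/-- the function `c̄ : (0,∞) → I_g`. -/
def cbar (l : ℝ) : ℝ :=
  if l < S.M S.c0 ∨ S.c1 = S.c0 then S.c0
  else if S.c0 < S.c1 then min S.c1 (sInf {c | c ∈ Set.Icc S.c0 S.c1 ∧ S.M c = l})
  else max S.c1 (sSup {c | c ∈ Set.Icc S.c1 S.c0 ∧ S.M c = l})

/-- assumption (FK13): `G⁺(c₀) = G⁻(c₀)`. -/
def FK13 : Prop := S.Gp S.c0 = S.Gm S.c0

/-- assumption (FK12). -/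
def FK12 : Prop :=
  ∀ δ₀ > (0:ℝ), ∃ δ ∈ Set.Ioc (0:ℝ) δ₀,
    (S.c1 ≤ S.c0 ∧ S.gmin < S.c1 → S.c1 - δ < S.Gm (S.c1 - δ)) ∧
    (S.c0 ≤ S.c1 ∧ S.c1 < S.gmax → S.Gp (S.c1 + δ) < S.c1 + δ)

/-- `u` is a classical (`C(Q̄) ∩ C^{2,1}(Q)`) solution of the quasi-linear equation (QL). -/
def SolvesQL (ε : ℝ) (u : Eu n → ℝ → ℝ) : Prop :=
  Classical21 u S.Ω ⊤ ∧ SolveL ε (fun x t => S.a x (u x t)) S.b u S.Ω ⊤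

/-- the boundary condition (BC): `u = g` on the parabolic boundary of `Q`. -/
def BC (u : Eu n → ℝ → ℝ) : Prop :=
  (∀ x ∈ closure S.Ω, u x 0 = S.g x) ∧ ∀ x ∈ frontier S.Ω, ∀ t > (0:ℝ), u x t = S.g x

end SettingB


lemma dotp_eq (x y : Eu n) : dotp x y = inner ℝ x y := by
  simp [dotp, PiLp.inner_apply, mul_comm]

lemma mquad_conv (A : Matrix (Fin n) (Fin n) ℝ) (p q : Eu n) (k l : ℝ) (h : k + l = 1) :
    mquad A (k • p + l • q) = k * mquad A p + l * mquad A q - k * l * mquad A (p - q) := by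
  obtain rfl : k = 1 - l := by linarith
  simp only [mquad, Finset.mul_sum, ← Finset.sum_add_distrib, ← Finset.sum_sub_distrib]
  refine Finset.sum_congr rfl fun i _ => Finset.sum_congr rfl fun j _ => ?_
  simp
  ring

lemma mquad_smul (A : Matrix (Fin n) (Fin n) ℝ) (p : Eu n) (k : ℝ) :
    mquad A (k • p) = k ^ 2 * mquad A p := by
  simp only [mquad, Finset.mul_sum]
  refine Finset.sum_congr rfl fun i _ => Finset.sum_congr rfl fun j _ => ?_
  simp
  ring

lemma ham_cont {α : Eu n → Matrix (Fin n) (Fin n) ℝ} (hα : Continuous α) {b : Eu n → Eu n}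
    (hb : Continuous b) : Continuous (fun q : Eu n × Eu n => Ham α b q.1 q.2) := by
  have h : ∀ i j, Continuous fun x => α x i j := fun i j => by
    exact (continuous_apply j).comp ((continuous_apply i).comp hα)
  have h2 : Continuous (fun q : Eu n × Eu n => inner ℝ (b q.1) q.2) := by fun_prop
  unfold Ham
  simp only [dotp_eq]
  refine Continuous.add ?_ h2
  unfold mquad
  refine continuous_finsetSum _ fun i _ => continuous_finsetSum _ fun j _ => ?_
  have := (h i j).comp (continuous_fst (X := Eu n) (Y := Eu n))
  refine (this.mul ?_).mul ?_ <;> fun_prop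

lemma flow_lip {b : Eu n → Eu n} {K : NNReal} (hb : LipschitzWith K b) {X : ℝ → Eu n → Eu n}
    (hX : GAS b X) (x y : Eu n) (t : ℝ) (ht : 0 ≤ t) :
    dist (X t x) (X t y) ≤ dist x y * Real.exp (K * t) := by
  obtain ⟨h0, hd, -, -⟩ := hX
  have hc : ∀ x, Continuous fun s => X s x := fun x =>
    continuous_iff_continuousAt.2 fun t => (hd x t).continuousAt
  have := dist_le_of_trajectories_ODE (v := fun _ => b) (K := K) (f := fun s => X s x)
    (g := fun s => X s y) (a := 0) (b := t) (δ := dist x y) (fun _ => hb) (hc x).continuousOn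
    (fun s _ => (hd x s).hasDerivWithinAt) (hc y).continuousOn
    (fun s _ => (hd y s).hasDerivWithinAt) (by simp [h0]) t ⟨ht, le_rfl⟩
  simpa using this

lemma flow_add {b : Eu n → Eu n} {K : NNReal} (hb : LipschitzWith K b) {X : ℝ → Eu n → Eu n}
    (hX : GAS b X) (x : Eu n) (t s : ℝ) : X t (X s x) = X (t + s) x := by
  obtain ⟨h0, hd, -, -⟩ := hX
  have := ODE_solution_unique_univ (v := fun _ => b) (s := fun _ => univ) (K := K) (t₀ := 0)
    (f := fun t => X t (X s x)) (g := fun t => X (t + s) x) (fun _ => hb.lipschitzOnWith)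
    (fun t => ⟨hd _ t, trivial⟩)
    (fun t => ⟨by simpa using (hd x (t + s)).comp_add_const t s, trivial⟩) (by simp [h0])
  exact congrFun this t

lemma flow_unif {b : Eu n → Eu n} {K : NNReal} (hb : LipschitzWith K b) {X : ℝ → Eu n → Eu n}
    (hX : GAS b X) {S : Set (Eu n)} (hS : IsCompact S) {r : ℝ} (hr : 0 < r) :
    ∃ T : ℝ, 0 ≤ T ∧ ∀ x ∈ S, ‖X T x‖ < r := by
  have hX' := hX
  obtain ⟨h0, hd, hl, hst⟩ := hX'
  obtain ⟨δ, hδ, hδ'⟩ := hst r hr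
  have key : ∃ T : ℝ, 0 ≤ T ∧ ∀ x ∈ S, ∀ t ≥ T, ‖X t x‖ < r := by
    refine hS.induction_on (p := fun S => ∃ T : ℝ, 0 ≤ T ∧ ∀ x ∈ S, ∀ t ≥ T, ‖X t x‖ < r)
      ⟨0, le_rfl, by simp⟩ ?_ ?_ ?_
    · rintro s t hst ⟨T, hT, h⟩
      exact ⟨T, hT, fun x hx => h x (hst hx)⟩
    · rintro s t ⟨T, hT, h⟩ ⟨T', hT', h'⟩
      refine ⟨max T T', le_max_of_le_left hT, ?_⟩
      rintro x (hx | hx) u hu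
      · exact h x hx u ((le_max_left _ _).trans hu)
      · exact h' x hx u ((le_max_right _ _).trans hu)
    · intro x hx
      have h1 : ∀ᶠ t in atTop, ‖X t x‖ < δ := by
        have := (hl x).norm
        simp only [norm_zero] at this
        exact this.eventually (gt_mem_nhds hδ)
      obtain ⟨T, hT1, hT⟩ := (h1.and (eventually_ge_atTop 0)).exists
      have hcT : Continuous (X T) := by
        refine LipschitzWith.continuous (K := ⟨Real.exp (K * T), (Real.exp_pos _).le⟩) ?_
        refine LipschitzWith.of_dist_le_mul fun y z => ?_
        rw [mul_comm]
        exact flow_lip hb hX y z T hT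
      refine ⟨{y | ‖X T y‖ < δ}, mem_nhdsWithin_of_mem_nhds ?_, T, hT, ?_⟩
      · exact (isOpen_lt hcT.norm continuous_const).mem_nhds hT1
      · intro y hy t ht
        have := hδ' _ hy (t - T) (by simpa using ht)
        rwa [flow_add hb hX, sub_add_cancel] at this
  obtain ⟨T, hT, h⟩ := key
  exact ⟨T, hT, fun x hx => h x hx T le_rfl⟩

lemma exists_psi {b : Eu n → Eu n} {K : NNReal} (hb : LipschitzWith K b) {X : ℝ → Eu n → Eu n}
    (hX : GAS b X) {S : Set (Eu n)} (hS : IsCompact S) {r : ℝ} (hr : 0 < r) :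
    ∃ (ψ g : Eu n → ℝ) (L : ℝ), 0 ≤ L ∧ (∀ x y, |ψ x - ψ y| ≤ L * ‖x - y‖) ∧ (∀ x, 0 ≤ ψ x) ∧
      Continuous g ∧ (∀ x ∈ S, r ≤ ‖x‖ → g x ≤ - (r / 2)) ∧
      ∀ z, HasDerivAt (fun s => ψ (X s z)) (g z) 0 := by
  obtain ⟨T, hT, hTS⟩ := flow_unif hb hX hS (half_pos hr)
  have hX' := hX
  obtain ⟨h0, hd, -, -⟩ := hX'
  have hc : ∀ x, Continuous fun s => X s x := fun x =>
    continuous_iff_continuousAt.2 fun t => (hd x t).continuousAt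
  have hcT : Continuous (X T) := by
    refine LipschitzWith.continuous (K := ⟨Real.exp (K * T), (Real.exp_pos _).le⟩) ?_
    refine LipschitzWith.of_dist_le_mul fun y z => ?_
    rw [mul_comm]
    exact flow_lip hb hX y z T hT
  have hii : ∀ x a c, IntervalIntegrable (fun s => ‖X s x‖) MeasureTheory.volume a c :=
    fun x a c => (hc x).norm.intervalIntegrable a c
  refine ⟨fun x => ∫ t in (0:ℝ)..T, ‖X t x‖, fun x => ‖X T x‖ - ‖x‖, Real.exp (K * T) * T,
    by positivity, ?_, ?_, ?_, ?_, ?_⟩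
  · intro x y
    simp only
    rw [← intervalIntegral.integral_sub (hii _ _ _) (hii _ _ _), ← Real.norm_eq_abs]
    have := intervalIntegral.norm_integral_le_of_norm_le_const (a := 0) (b := T)
      (f := fun t => ‖X t x‖ - ‖X t y‖) (C := Real.exp (K * T) * ‖x - y‖) ?_
    · rw [sub_zero, abs_of_nonneg hT] at this
      linarith
    · intro t ht
      rw [uIoc_of_le hT] at ht
      have h1 := flow_lip hb hX x y t ht.1.le
      rw [dist_eq_norm, dist_eq_norm] at h1
      have h2 : Real.exp (K * t) ≤ Real.exp (K * T) :=
        Real.exp_le_exp.2 (mul_le_mul_of_nonneg_left ht.2 K.2)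
      calc _ ≤ ‖X t x - X t y‖ := by
              rw [Real.norm_eq_abs]; exact abs_norm_sub_norm_le _ _
        _ ≤ _ := h1
        _ ≤ _ := by rw [mul_comm]; exact mul_le_mul_of_nonneg_right h2 (norm_nonneg _)
  · intro x
    exact intervalIntegral.integral_nonneg hT fun _ _ => norm_nonneg _
  · exact hcT.norm.sub continuous_norm
  · intro x hx hrx
    have := hTS x hx
    simp only
    linarith
  · intro z
    have e : (fun s => ∫ t in (0:ℝ)..T, ‖X t (X s z)‖) =
        fun s => (∫ t in (0:ℝ)..(T + s), ‖X t z‖) - ∫ t in (0:ℝ)..s, ‖X t z‖ := by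
      funext s
      simp only [flow_add hb hX]
      rw [intervalIntegral.integral_comp_add_right (fun t => ‖X t z‖) s,
        intervalIntegral.integral_interval_sub_left (hii _ _ _) (hii _ _ _), zero_add]
    rw [e]
    have hF : ∀ u, HasDerivAt (fun u => ∫ t in (0:ℝ)..u, ‖X t z‖) ‖X u z‖ u := fun u =>
      intervalIntegral.integral_hasDerivAt_right (hii _ _ _)
        (hc z).norm.aestronglyMeasurable.stronglyMeasurableAtFilter (hc z).norm.continuousAt
    have h1 : HasDerivAt (fun s => ∫ t in (0:ℝ)..(T + s), ‖X t z‖) ‖X T z‖ 0 := by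
      have := (hF (T + 0)).comp_const_add T 0
      simpa using this
    have h2 := h1.sub (hF 0)
    rw [h0] at h2
    exact h2

lemma cone {Ω : Set (Eu n)} {ν : Eu n → Eu n} (hdom : IsBdC1With Ω ν) {x : Eu n}
    (hx : x ∈ closure Ω) : ∃ (η : Eu n) (κ : ℝ), 0 < κ ∧ ∀ y ∈ closure Ω, ∀ ε : ℝ, ∀ s : Eu n,
      ‖y - x‖ < κ → 0 < ε → ε < κ → ‖s‖ < κ → y + ε • (η + s) ∈ Ω := by
  obtain ⟨hO, -, ρ, hρ, hΩ, hf⟩ := hdom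
  by_cases hxΩ : x ∈ Ω
  · obtain ⟨d, hd, hball⟩ := Metric.isOpen_iff.1 hO x hxΩ
    refine ⟨0, min (d / 2) 1, by positivity, ?_⟩
    intro y _ ε s hy hε hε' hs
    apply hball
    rw [mem_ball, dist_eq_norm]
    have e : y + ε • (0 + s) - x = (y - x) + ε • s := by rw [zero_add]; abel
    rw [e]
    have h1 := norm_add_le (y - x) (ε • s)
    rw [norm_smul, Real.norm_eq_abs, abs_of_pos hε] at h1
    have h2 := lt_of_lt_of_le hy (min_le_left _ _)
    have h3 := lt_of_lt_of_le hε' (min_le_left _ _)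
    have h4 := lt_of_lt_of_le hs (min_le_right _ _)
    nlinarith [norm_nonneg s]
  · have hfr : x ∈ frontier Ω := by rw [hO.frontier_eq]; exact ⟨hx, hxΩ⟩
    have hg := (hf x hfr).1
    set G := gradient ρ x with hG
    have hGpos : 0 < ‖G‖ := norm_pos_iff.2 hg
    have hcl : ∀ y ∈ closure Ω, ρ y ≤ 0 := by
      intro y hy
      have : closure Ω ⊆ {x | ρ x ≤ 0} := by
        refine closure_minimal ?_ (isClosed_le hρ.continuous continuous_const)
        rw [hΩ]; intro z hz; exact le_of_lt (a := ρ z) hz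
      exact this hy
    have hstrict : HasStrictFDerivAt ρ (fderiv ℝ ρ x) x :=
      hρ.contDiffAt.hasStrictFDerivAt (by norm_num)
    have hGd : ∀ h, fderiv ℝ ρ x h = inner ℝ G h := by
      intro h
      rw [hG, gradient, InnerProductSpace.toDual_symm_apply]
    have := hstrict.isLittleO.def (c := ‖G‖ / 8) (by positivity)
    rw [Metric.eventually_nhds_iff] at this
    obtain ⟨d, hd, hd'⟩ := this
    refine ⟨-G, min (min (d / 2) (d / (4 * ‖G‖ + 4))) (‖G‖ / 4), by positivity, ?_⟩
    intro y hy ε s hyx hε hε' hs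
    have h2 := lt_of_lt_of_le hyx ((min_le_left _ _).trans (min_le_left _ _))
    have h3 := lt_of_lt_of_le hε' ((min_le_left _ _).trans (min_le_right _ _))
    have h4 := lt_of_lt_of_le hs (min_le_right _ _)
    rw [lt_div_iff₀ (by positivity)] at h3
    have hn : ‖-G + s‖ ≤ 5 / 4 * ‖G‖ := by
      have := norm_add_le (-G) s
      rw [norm_neg] at this
      linarith
    have hen : ‖ε • (-G + s)‖ = ε * ‖-G + s‖ := by
      rw [norm_smul, Real.norm_eq_abs, abs_of_pos hε]
    have hdist : dist (y + ε • (-G + s), y) (x, x) < d := by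
      rw [Prod.dist_eq]
      refine max_lt ?_ ?_
      · simp only [dist_eq_norm]
        have e : y + ε • (-G + s) - x = (y - x) + ε • (-G + s) := by abel
        rw [e]
        have h1 := norm_add_le (y - x) (ε • (-G + s))
        rw [hen] at h1
        have : ε * ‖-G + s‖ ≤ ε * (5 / 4 * ‖G‖) := mul_le_mul_of_nonneg_left hn hε.le
        nlinarith
      · simp only [dist_eq_norm]
        linarith
    have h5 := hd' hdist
    simp only [add_sub_cancel_left] at h5
    rw [hen, hGd, inner_smul_right, inner_add_right, inner_neg_right,
      real_inner_self_eq_norm_sq, Real.norm_eq_abs] at h5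
    have h6 := (abs_le.1 h5).2
    have h7 : inner ℝ G s ≤ ‖G‖ * (‖G‖ / 4) :=
      (real_inner_le_norm G s).trans (mul_le_mul_of_nonneg_left h4.le hGpos.le)
    have h8 := hcl y hy
    rw [hΩ]
    show ρ _ < 0
    have h9 : ‖G‖ / 8 * (ε * ‖-G + s‖) ≤ ‖G‖ / 8 * (ε * (5 / 4 * ‖G‖)) := by gcongr
    have h10 : ε * (-‖G‖ ^ 2 + inner ℝ G s) ≤ ε * (-‖G‖ ^ 2 + ‖G‖ * (‖G‖ / 4)) := by gcongr
    have h11 : 0 < ε * ‖G‖ ^ 2 := by positivity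
    nlinarith

lemma test_fun (l c₁ c₂ : ℝ) (a₁ a₂ : Eu n) :
    ContDiff ℝ 1 (fun u : Eu n => l * (‖c₁ • u + a₁‖ ^ 2 + ‖c₂ • u + a₂‖ ^ 2)) ∧
    ∀ x, gradient (fun u : Eu n => l * (‖c₁ • u + a₁‖ ^ 2 + ‖c₂ • u + a₂‖ ^ 2)) x =
      l • ((2 * c₁) • (c₁ • x + a₁) + (2 * c₂) • (c₂ • x + a₂)) := by
  have hd : ∀ (c : ℝ) (a x : Eu n), HasFDerivAt (fun u : Eu n => ‖c • u + a‖ ^ 2)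
      (2 • (innerSL ℝ (c • x + a)).comp (c • ContinuousLinearMap.id ℝ (Eu n))) x := by
    intro c a x
    exact (((hasFDerivAt_id x).const_smul c).add_const a).norm_sq
  constructor
  · have hc : ∀ (c : ℝ) (a : Eu n), ContDiff ℝ 1 (fun u : Eu n => ‖c • u + a‖ ^ 2) := by
      intro c a
      exact ContDiff.norm_sq ℝ (by fun_prop)
    exact contDiff_const.mul ((hc _ _).add (hc _ _))
  · intro x
    apply HasGradientAt.gradient
    rw [hasGradientAt_iff_hasFDerivAt]
    have e : (InnerProductSpace.toDual ℝ (Eu n))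
        (l • ((2 * c₁) • (c₁ • x + a₁) + (2 * c₂) • (c₂ • x + a₂))) =
        l • ((2 • (innerSL ℝ (c₁ • x + a₁)).comp (c₁ • ContinuousLinearMap.id ℝ (Eu n))) +
          (2 • (innerSL ℝ (c₂ • x + a₂)).comp (c₂ • ContinuousLinearMap.id ℝ (Eu n)))) := by
      refine ContinuousLinearMap.ext fun h => ?_
      simp only [InnerProductSpace.toDual_apply_apply, inner_add_left, real_inner_smul_left,
        real_inner_smul_right,
        _root_.smul_apply, _root_.add_apply,
        ContinuousLinearMap.comp_apply, innerSL_apply_apply, ContinuousLinearMap.id_apply,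
        nsmul_eq_mul, smul_eq_mul, Nat.cast_ofNat]
      ring
    rw [e]
    exact ((hd c₁ a₁ x).add (hd c₂ a₂ x)).const_mul l

lemma ev_small (c a : ℝ) (ha : 0 < a) : ∀ᶠ ε : ℝ in 𝓝[>] 0, c * ε < a := by
  have : Tendsto (fun ε : ℝ => c * ε) (𝓝[>] 0) (𝓝 0) := by
    have h : Tendsto (fun ε : ℝ => c * ε) (𝓝 0) (𝓝 (c * 0)) :=
      (continuous_const.mul continuous_id).tendsto 0
    rw [mul_zero] at h
    exact h.mono_left nhdsWithin_le_nhds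
  exact this.eventually (gt_mem_nhds ha)

lemma arith_one (s : ℝ) : s ≤ s ^ 2 + 1 / 2 := by nlinarith [sq_nonneg (s - 1 / 2)]

lemma arith_pen {s r d A e N M t : ℝ} (h1 : s + r + d ≤ A * e * M)
    (h2 : A * e * M ≤ A * e * ((s + r) + (1 + 2 * N))) (h3 : A * e * (s + r) ≤ 1 / 2 * (s + r))
    (h4 : 2 * A * (1 + 2 * N) * e < t) (hd : 0 ≤ d) : s + r + d < t := by
  linarith

set_option maxHeartbeats 1000000 in
lemma doubling {H : Eu n → Eu n → ℝ} {Ω : Set (Eu n)} {ν : Eu n → Eu n} (hdom : IsBdC1With Ω ν)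
    {b : Eu n → Eu n} {X : ℝ → Eu n → Eu n} (hX : GAS b X)
    {v w : Eu n → ℝ} {Lv : ℝ} (hLv : 0 ≤ Lv)
    (hvL : ∀ x ∈ closure Ω, ∀ y ∈ closure Ω, |v x - v y| ≤ Lv * ‖x - y‖)
    (hv : ViscSub H Ω v) (hvc : ContinuousOn v (closure Ω))
    (hw_lsc : LowerSemicontinuousOn w (closure Ω))
    (hw : ViscSup H (closure Ω) w)
    {ψ g : Eu n → ℝ} {L : ℝ} (hL : 0 ≤ L) (hψL : ∀ x y, |ψ x - ψ y| ≤ L * ‖x - y‖)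
    (hψc : Continuous ψ)
    (hψd : ∀ z, HasDerivAt (fun s => ψ (X s z)) (g z) 0)
    {k μ : ℝ} (hk : 0 < k) (hμ : 0 < μ) {x₀ : Eu n} (hx₀ : x₀ ∈ closure Ω)
    (hmax : ∀ y ∈ closure Ω, k * v y + μ * ψ y - w y ≤ k * v x₀ + μ * ψ x₀ - w x₀)
    (τ : ℝ) (hτ : 0 < τ) :
    ∃ x y z p₁ p₂ e : Eu n, ‖x - x₀‖ < τ ∧ ‖y - x₀‖ < τ ∧ ‖z - x₀‖ < τ ∧ ‖e‖ < τ ∧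
      H x p₁ ≤ 0 ∧ ‖p₂‖ ≤ 2 * L ∧ inner ℝ (b z) p₂ = g z ∧
      0 ≤ H y (k • p₁ + μ • p₂ + e) := by
  obtain ⟨η, κ, hκ, hcone⟩ := cone hdom hx₀
  have hO : IsOpen Ω := hdom.1
  have hcomp : IsCompact (closure Ω) := hdom.2.1.isCompact_closure
  set A : ℝ := k * Lv + μ * L with hA
  have hA0 : 0 ≤ A := by positivity
  set N := ‖η‖ with hN
  have hN0 : 0 ≤ N := norm_nonneg _
  set τ' : ℝ := min (κ / 2) (min (τ / 4) 1) with hτ'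
  have hτ'0 : 0 < τ' := by positivity
  have hτ1 : τ' ≤ κ / 2 := min_le_left _ _
  have hτ2 : τ' ≤ τ / 4 := (min_le_right _ _).trans (min_le_left _ _)
  have hτ3 : τ' ≤ 1 := (min_le_right _ _).trans (min_le_right _ _)
  obtain ⟨ε, ⟨⟨⟨h1, h2⟩, h3⟩, h4⟩, h5⟩ := ((((ev_small 1 κ hκ).and
    (ev_small A (1 / 2) (by norm_num))).and
    (ev_small (2 * A * (1 + 2 * N)) (τ' ^ 2) (by positivity))).and
    (ev_small (N + 2) (τ / 4) (by positivity))).and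
    (self_mem_nhdsWithin : ∀ᶠ ε : ℝ in 𝓝[>] 0, ε ∈ Ioi (0:ℝ)) |>.exists
  have hε : 0 < ε := h5
  rw [one_mul] at h1
  -- the doubled functional
  set f : Eu n × Eu n × Eu n → ℝ := fun q => w q.2.1 + (-(k * v q.1) - μ * ψ q.2.2 +
    ‖ε⁻¹ • (q.1 - q.2.1) - η‖ ^ 2 + ‖ε⁻¹ • (q.2.2 - q.1)‖ ^ 2 + ‖q.2.1 - x₀‖ ^ 2) with hf
  have hlsc : LowerSemicontinuousOn f (closure Ω ×ˢ closure Ω ×ˢ closure Ω) := by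
    refine LowerSemicontinuousOn.add ?_ (ContinuousOn.lowerSemicontinuousOn ?_)
    · refine LowerSemicontinuousOn.comp (f := w) (g := fun q : Eu n × Eu n × Eu n => q.2.1) hw_lsc
        (by fun_prop) ?_
      intro q hq
      exact hq.2.1
    · have hv1 : ContinuousOn (fun q : Eu n × Eu n × Eu n => v q.1)
          (closure Ω ×ˢ closure Ω ×ˢ closure Ω) :=
        hvc.comp (by fun_prop) fun q hq => hq.1
      have hr : Continuous (fun q : Eu n × Eu n × Eu n => - μ * ψ q.2.2 +
          ‖ε⁻¹ • (q.1 - q.2.1) - η‖ ^ 2 + ‖ε⁻¹ • (q.2.2 - q.1)‖ ^ 2 + ‖q.2.1 - x₀‖ ^ 2) := by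
        fun_prop
      refine ((hv1.const_smul (-k)).add hr.continuousOn).congr fun q _ => ?_
      show _ = (-k) * v q.1 + (- μ * ψ q.2.2 +
          ‖ε⁻¹ • (q.1 - q.2.1) - η‖ ^ 2 + ‖ε⁻¹ • (q.2.2 - q.1)‖ ^ 2 + ‖q.2.1 - x₀‖ ^ 2)
      ring
  obtain ⟨⟨x, y, z⟩, ⟨hx, hy, hz⟩, hmin⟩ := hlsc.exists_isMinOn
    (⟨(x₀, x₀, x₀), hx₀, hx₀, hx₀⟩ : (closure Ω ×ˢ closure Ω ×ˢ closure Ω).Nonempty) (hcomp.prod (hcomp.prod hcomp))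
  have hmin' : ∀ x' ∈ closure Ω, ∀ y' ∈ closure Ω, ∀ z' ∈ closure Ω,
      f (x, y, z) ≤ f (x', y', z') := fun x' hx' y' hy' z' hz' =>
    hmin (a := (x', y', z')) ⟨hx', hy', hz'⟩
  simp only [hf] at hmin'
  set S := ε⁻¹ • (x - y) - η with hS
  set R := ε⁻¹ • (z - x) with hR
  have hxS : x = y + ε • (η + S) := by
    rw [hS, add_sub_cancel, smul_inv_smul₀ hε.ne']; abel
  have hzR : z = y + ε • (η + (S + R)) := by
    have : z = x + ε • R := by rw [hR, smul_inv_smul₀ hε.ne']; abel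
    rw [this]; nth_rewrite 1 [hxS]; module
  have hzx : z - x = ε • R := by rw [hR, smul_inv_smul₀ hε.ne']
  have hxy : ‖x - y‖ ≤ ε * (N + ‖S‖) := by
    have : x - y = ε • (η + S) := by nth_rewrite 1 [hxS]; abel
    rw [this, norm_smul, Real.norm_eq_abs, abs_of_pos hε]
    exact mul_le_mul_of_nonneg_left (norm_add_le _ _) hε.le
  have hzx' : ‖z - x‖ = ε * ‖R‖ := by
    rw [hzx, norm_smul, Real.norm_eq_abs, abs_of_pos hε]
  have hzy : ‖z - y‖ ≤ ε * (N + ‖S‖ + ‖R‖) := by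
    have : z - y = (z - x) + (x - y) := by abel
    have h := norm_add_le (z - x) (x - y)
    rw [← this] at h
    linarith
  -- comparison with the shifted point
  have hsh : x₀ + ε • η ∈ closure Ω := by
    have := hcone x₀ hx₀ ε 0 (by simpa using hκ) hε h1 (by simpa using hκ)
    rw [add_zero] at this
    exact subset_closure this
  have hcmp := hmin' _ hsh _ hx₀ _ hsh
  rw [add_sub_cancel_left, inv_smul_smul₀ hε.ne', sub_self, sub_self, sub_self] at hcmp
  simp only [smul_zero, norm_zero] at hcmp
  have hηn : ‖x₀ + ε • η - x₀‖ = ε * N := by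
    rw [add_sub_cancel_left, norm_smul, Real.norm_eq_abs, abs_of_pos hε]
  have e1 := (abs_le.1 (hvL _ hsh _ hx₀)).1
  have e2 := (abs_le.1 (hψL (x₀ + ε • η) x₀)).1
  rw [hηn] at e1 e2
  have e3 := (abs_le.1 (hvL _ hx _ hy)).2
  have e4 := (abs_le.1 (hψL z y)).2
  have e5 := hmax y hy
  have e6 : v x - v y ≤ Lv * (ε * (N + ‖S‖)) := e3.trans (mul_le_mul_of_nonneg_left hxy hLv)
  have e7 : ψ z - ψ y ≤ L * (ε * (N + ‖S‖ + ‖R‖)) := e4.trans (mul_le_mul_of_nonneg_left hzy hL)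
  have k1 := mul_le_mul_of_nonneg_left e1 hk.le
  have k2 := mul_le_mul_of_nonneg_left e2 hμ.le
  have k6 := mul_le_mul_of_nonneg_left e6 hk.le
  have k7 := mul_le_mul_of_nonneg_left e7 hμ.le
  have hpen : ‖S‖ ^ 2 + ‖R‖ ^ 2 + ‖y - x₀‖ ^ 2 ≤ A * ε * (2 * N + ‖S‖ + ‖R‖) := by
    have q1 : 0 ≤ k * Lv * ε * ‖R‖ := by positivity
    rw [hA]
    linarith
  have hb1 : ‖S‖ ^ 2 + ‖R‖ ^ 2 + ‖y - x₀‖ ^ 2 < τ' ^ 2 := by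
    have q1 : 2 * N + ‖S‖ + ‖R‖ ≤ (‖S‖ ^ 2 + ‖R‖ ^ 2) + (1 + 2 * N) := by
      linarith [sq_nonneg (‖S‖ - 1 / 2), sq_nonneg (‖R‖ - 1 / 2), arith_one ‖S‖, arith_one ‖R‖]
    have q2 := mul_le_mul_of_nonneg_left q1 (mul_nonneg hA0 hε.le)
    have q3 : A * ε * (‖S‖ ^ 2 + ‖R‖ ^ 2) ≤ 1 / 2 * (‖S‖ ^ 2 + ‖R‖ ^ 2) :=
      mul_le_mul_of_nonneg_right h2.le (by positivity)
    exact arith_pen hpen q2 q3 h3 (sq_nonneg ‖y - x₀‖)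
  have hS1 : ‖S‖ < τ' := lt_of_pow_lt_pow_left₀ 2 hτ'0.le
    (by linarith [sq_nonneg ‖R‖, sq_nonneg ‖y - x₀‖])
  have hR1 : ‖R‖ < τ' := lt_of_pow_lt_pow_left₀ 2 hτ'0.le
    (by linarith [sq_nonneg ‖S‖, sq_nonneg ‖y - x₀‖])
  have hy1 : ‖y - x₀‖ < τ' := lt_of_pow_lt_pow_left₀ 2 hτ'0.le
    (by linarith [sq_nonneg ‖R‖, sq_nonneg ‖S‖])
  have hxΩ : x ∈ Ω := by
    have := hcone y hy ε S (by linarith) hε h1 (by linarith)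
    rwa [← hxS] at this
  have hzΩ : z ∈ Ω := by
    have := hcone y hy ε (S + R) (by linarith) hε h1
      (by have := norm_add_le S R; linarith)
    rwa [← hzR] at this
  -- test functions
  obtain ⟨t1, t2⟩ := test_fun k⁻¹ ε⁻¹ (-ε⁻¹) (-(ε⁻¹ • y) - η) (ε⁻¹ • z)
  obtain ⟨u1, u2⟩ := test_fun (-1) (-ε⁻¹) 1 (ε⁻¹ • x - η) (-x₀)
  have r1 : ∀ u, ε⁻¹ • u + (-(ε⁻¹ • y) - η) = ε⁻¹ • (u - y) - η := fun u => by module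
  have r2 : ∀ u, (-ε⁻¹) • u + ε⁻¹ • z = ε⁻¹ • (z - u) := fun u => by module
  have r3 : ∀ u, (-ε⁻¹) • u + (ε⁻¹ • x - η) = ε⁻¹ • (x - u) - η := fun u => by module
  have r4 : ∀ u, (1:ℝ) • u + -x₀ = u - x₀ := fun u => by module
  simp only [r1, r2] at t1 t2
  simp only [r3, r4] at u1 u2
  have hsub := hv _ t1 x hxΩ (by
    refine IsMaxOn.localize ?_
    intro x' hx'
    have := hmin' x' (subset_closure hx') y hy z hz
    show v x' - _ ≤ v x - _
    have h' : k * (v x' - k⁻¹ * (‖ε⁻¹ • (x' - y) - η‖ ^ 2 + ‖ε⁻¹ • (z - x')‖ ^ 2)) ≤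
        k * (v x - k⁻¹ * (‖ε⁻¹ • (x - y) - η‖ ^ 2 + ‖ε⁻¹ • (z - x)‖ ^ 2)) := by
      rw [mul_sub, mul_sub, mul_inv_cancel_left₀ hk.ne', mul_inv_cancel_left₀ hk.ne']
      linarith
    exact le_of_mul_le_mul_left h' hk)
  have hsup := hw _ u1 y hy (by
    refine IsMinOn.localize ?_
    intro y' hy'
    have := hmin' x hx y' hy' z hz
    show w y - _ ≤ w y' - _
    linarith)
  rw [t2, ← hS, ← hR] at hsub
  rw [u2, ← hS] at hsup
  refine ⟨x, y, z, _, (μ⁻¹ * (2 * ε⁻¹)) • R, -((2:ℝ) • (y - x₀)), ?_, ?_, ?_, ?_, hsub, ?_, ?_, ?_⟩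
  · have e : x - x₀ = (y - x₀) + (x - y) := by abel
    rw [e]
    have := norm_add_le (y - x₀) (x - y)
    have h' : ε * (N + ‖S‖) ≤ ε * (N + 2) :=
      mul_le_mul_of_nonneg_left (by linarith) hε.le
    linarith
  · linarith
  · have e : z - x₀ = (y - x₀) + (z - y) := by abel
    rw [e]
    have := norm_add_le (y - x₀) (z - y)
    have h' : ε * (N + ‖S‖ + ‖R‖) ≤ ε * (N + 2) :=
      mul_le_mul_of_nonneg_left (by linarith) hε.le
    linarith
  · rw [norm_neg, norm_smul]
    norm_num
    linarith
  · have c1 := hmin' x hx y hy x hx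
    rw [sub_self, smul_zero, norm_zero] at c1
    have c2 := (abs_le.1 (hψL z x)).2
    rw [hzx'] at c2
    have c3 := mul_le_mul_of_nonneg_left c2 hμ.le
    have c4 : ‖R‖ * ‖R‖ ≤ ‖R‖ * (μ * L * ε) := by linarith
    have c5 : ‖R‖ ≤ μ * L * ε := by
      rcases (norm_nonneg R).eq_or_lt with h | h
      · rw [← h]; positivity
      · exact le_of_mul_le_mul_left c4 h
    rw [norm_smul, Real.norm_eq_abs, abs_of_pos (by positivity)]
    calc _ ≤ μ⁻¹ * (2 * ε⁻¹) * (μ * L * ε) := by gcongr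
      _ = 2 * L := by field_simp
  · obtain ⟨hX0, hXd, -, -⟩ := hX
    have d1 : HasDerivAt (fun s => ‖ε⁻¹ • (X s z - x)‖ ^ 2) _ 0 :=
      (((hXd z 0).sub_const x).const_smul ε⁻¹).norm_sq
    have d2 := ((hψd z).const_mul μ).sub d1
    have hloc : IsLocalMax ((fun s => μ * ψ (X s z)) - fun s => ‖ε⁻¹ • (X s z - x)‖ ^ 2) 0 := by
      have hev : ∀ᶠ s in 𝓝 (0:ℝ), X s z ∈ Ω := by
        apply (hXd z 0).continuousAt.eventually_mem
        rw [hX0]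
        exact hO.mem_nhds hzΩ
      filter_upwards [hev] with s hs
      have := hmin' x hx y hy _ (subset_closure hs)
      simp only [Pi.sub_apply, hX0]
      linarith
    have d3 := hloc.hasDerivAt_eq_zero d2
    simp only [Pi.smul_apply, hX0] at d3
    rw [← hR, inner_smul_right] at d3
    rw [inner_smul_right, real_inner_comm]
    have : μ * g z = 2 * (ε⁻¹ * inner ℝ R (b z)) := by linarith
    field_simp
    field_simp at this
    linarith
  · convert hsup using 2
    rw [smul_smul k, mul_inv_cancel₀ hk.ne', smul_smul μ, mul_inv_cancel_left₀ hμ.ne']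
    module

lemma ham_limit {θ : ℝ} (hθ : 0 < θ) {α : Eu n → Matrix (Fin n) (Fin n) ℝ} {b : Eu n → Eu n}
    {x : Eu n} (hα : memS θ (α x)) {l μ L r gx : ℝ} (hl : 0 < l) (hl1 : l < 1) (hμ : 0 < μ)
    {p₁ p₂ : Eu n} (h1 : Ham α b x p₁ ≤ 0) (h2 : ‖p₂‖ ≤ 2 * L) (hg : inner ℝ (b x) p₂ = gx)
    (hgr : gx ≤ -(r / 2)) (hμs : μ * (4 * L ^ 2) < l * θ * (r / 2)) :
    Ham α b x ((1 - l) • p₁ + μ • p₂) < 0 := by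
  have e : (1 - l) • p₁ + μ • p₂ = (1 - l) • p₁ + l • ((μ / l) • p₂) := by
    rw [smul_smul, mul_div_cancel₀ _ hl.ne']
  have hpos := (hα.2 (p₁ - (μ / l) • p₂)).1
  have hup := (hα.2 p₂).2
  have hq : 0 ≤ mquad (α x) (p₁ - (μ / l) • p₂) := le_trans (by positivity) hpos
  have hc : mquad (α x) ((1 - l) • p₁ + μ • p₂) ≤
      (1 - l) * mquad (α x) p₁ + l * ((μ / l) ^ 2 * mquad (α x) p₂) := by
    rw [e, mquad_conv _ _ _ _ _ (by ring), mquad_smul]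
    have : 0 ≤ (1 - l) * l * mquad (α x) (p₁ - (μ / l) • p₂) :=
      mul_nonneg (mul_nonneg (by linarith) hl.le) hq
    linarith
  unfold Ham at h1 ⊢
  rw [dotp_eq] at h1 ⊢
  rw [inner_add_right, inner_smul_right, inner_smul_right, hg]
  have h3 : ‖p₂‖ ^ 2 ≤ 4 * L ^ 2 := by
    have := pow_le_pow_left₀ (norm_nonneg p₂) h2 2
    linarith
  have h4 : mquad (α x) p₂ ≤ θ⁻¹ * (4 * L ^ 2) :=
    hup.trans (mul_le_mul_of_nonneg_left h3 (by positivity))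
  have h5 : l * ((μ / l) ^ 2 * mquad (α x) p₂) ≤ l * ((μ / l) ^ 2 * (θ⁻¹ * (4 * L ^ 2))) := by
    gcongr
  have h6 : l * ((μ / l) ^ 2 * (θ⁻¹ * (4 * L ^ 2))) = μ * ((μ * (4 * L ^ 2)) / (l * θ)) := by
    field_simp
  have h7 : (μ * (4 * L ^ 2)) / (l * θ) < r / 2 := by
    rw [div_lt_iff₀ (by positivity)]
    linarith
  have h8 := mul_lt_mul_of_pos_left h7 hμ
  have h9 := mul_le_mul_of_nonneg_left hgr hμ.le
  have h10 : (1 - l) * (mquad (α x) p₁ + inner ℝ (b x) p₁) ≤ 0 :=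
    mul_nonpos_of_nonneg_of_nonpos (by linarith) h1
  linarith

lemma p_bound {θ : ℝ} (hθ : 0 < θ) {α : Eu n → Matrix (Fin n) (Fin n) ℝ} {b : Eu n → Eu n}
    {x : Eu n} (hα : memS θ (α x)) {p : Eu n} (h : Ham α b x p ≤ 0) : ‖p‖ ≤ ‖b x‖ / θ := by
  unfold Ham at h
  rw [dotp_eq] at h
  have h1 := (hα.2 p).1
  have h2 := (abs_le.1 (abs_real_inner_le_norm (b x) p)).1
  rw [le_div_iff₀ hθ]
  rcases (norm_nonneg p).eq_or_lt with h0 | h0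
  · rw [← h0]; simp
  · have : ‖p‖ * (‖p‖ * θ) ≤ ‖p‖ * ‖b x‖ := by nlinarith
    exact le_of_mul_le_mul_left this h0

lemma ham_tendsto {α : Eu n → Matrix (Fin n) (Fin n) ℝ} (hα : Continuous α) {b : Eu n → Eu n}
    (hb : Continuous b) {x p : ℕ → Eu n} {x₀ q : Eu n} (hx : Tendsto x atTop (𝓝 x₀))
    (hp : Tendsto p atTop (𝓝 q)) :
    Tendsto (fun j => Ham α b (x j) (p j)) atTop (𝓝 (Ham α b x₀ q)) :=
  Tendsto.comp (g := fun q : Eu n × Eu n => Ham α b q.1 q.2)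
    (f := fun j => (x j, p j)) ((ham_cont hα hb).tendsto (x₀, q)) (hx.prodMk_nhds hp)

set_option maxHeartbeats 1000000 in
/-- Lemma C.1: comparison for the state-constraints problem. -/
theorem stmt19 {n : ℕ} (θ₀ : ℝ) (hθ : θ₀ ∈ Set.Ioc (0:ℝ) 1)
    (α : Eu n → Matrix (Fin n) (Fin n) ℝ)
    (hαc : Continuous α) (hαm : ∀ x : Eu n, memS θ₀ (α x))
    (Ω : Set (Eu n)) (ν : Eu n → Eu n) (b : Eu n → Eu n)
    (hdom : IsBdC1With Ω ν) (h0 : (0 : Eu n) ∈ Ω)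
    (hbl : ∃ K : NNReal, LipschitzWith K b) (hb0 : b 0 = 0)
    (hgas : ∃ X : ℝ → Eu n → Eu n, GAS b X)
    (hin : ∀ x ∈ frontier Ω, dotp (b x) (ν x) < 0)
    (v w : Eu n → ℝ)
    (hv_lip : ∃ K : NNReal, LipschitzOnWith K v (closure Ω))
    (hv : ViscSub (Ham α b) Ω v)
    (hw_lsc : LowerSemicontinuousOn w (closure Ω))
    (hw : ViscSup (Ham α b) (closure Ω) w)
    (h0vw : v 0 ≤ w 0) :
    ∀ x ∈ closure Ω, v x ≤ w x := by
  obtain ⟨hθ0, -⟩ := hθ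
  obtain ⟨K, hb⟩ := hbl
  obtain ⟨X, hX⟩ := hgas
  obtain ⟨Kv, hKv⟩ := hv_lip
  have hcomp : IsCompact (closure Ω) := hdom.2.1.isCompact_closure
  have h0c : (0 : Eu n) ∈ closure Ω := subset_closure h0
  have hvc : ContinuousOn v (closure Ω) := hKv.continuousOn
  by_contra hcon
  push Not at hcon
  obtain ⟨x₁, hx₁, hlt⟩ := hcon
  obtain ⟨m, hm⟩ : ∃ m, m = v x₁ - w x₁ := ⟨_, rfl⟩
  have hm0 : 0 < m := by linarith
  obtain ⟨Mv, hMv⟩ := hcomp.exists_bound_of_continuousOn hvc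
  have hMv0 : 0 ≤ Mv := (norm_nonneg _).trans (hMv 0 h0c)
  -- radius
  have hlsc0 := (hw_lsc.add (hvc.neg.lowerSemicontinuousOn)) 0 h0c (-(m / 4)) (by
    simp only [Pi.neg_apply]; linarith)
  obtain ⟨r, hr, hball⟩ := Metric.mem_nhdsWithin_iff.1 hlsc0
  have hball' : ∀ x ∈ closure Ω, ‖x‖ < r → v x - w x < m / 4 := by
    intro x hx hxr
    have : -(m / 4) < w x + (-v) x := hball ⟨by simpa using hxr, hx⟩
    simp only [Pi.neg_apply] at this
    linarith
  obtain ⟨ψ, g, L, hL, hψL, hψ0, hgc, hgr, hψd⟩ := exists_psi hb hX hcomp hr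
  have hψc : Continuous ψ := by
    refine LipschitzWith.continuous (K := ⟨L, hL⟩) (LipschitzWith.of_dist_le_mul fun x y => ?_)
    rw [Real.dist_eq, dist_eq_norm]
    exact hψL x y
  obtain ⟨P, hP⟩ := hcomp.exists_bound_of_continuousOn hψc.continuousOn
  have hP0 : 0 ≤ P := (norm_nonneg _).trans (hP 0 h0c)
  obtain ⟨l, hl0, hl1, hlM⟩ : ∃ l : ℝ, 0 < l ∧ l < 1 ∧ l * Mv ≤ m / 8 := by
    refine ⟨min (1 / 2) (m / (8 * (Mv + 1))), by positivity,
      lt_of_le_of_lt (min_le_left _ _) (by norm_num), ?_⟩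
    calc _ ≤ m / (8 * (Mv + 1)) * Mv := by gcongr; exact min_le_right _ _
      _ ≤ m / 8 := by
        rw [div_mul_eq_mul_div, div_le_div_iff₀ (by positivity) (by positivity)]
        nlinarith
  obtain ⟨μ, hμ0, hμP, hμL⟩ : ∃ μ : ℝ, 0 < μ ∧ μ * P ≤ m / 8 ∧
      μ * (4 * L ^ 2) < l * θ₀ * (r / 2) := by
    have a1 := ev_small P (m / 8) (by positivity)
    have a2 := ev_small (4 * L ^ 2) (l * θ₀ * (r / 2)) (by positivity)
    obtain ⟨μ, ⟨q1, q2⟩, q3⟩ := ((a1.and a2).and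
      (self_mem_nhdsWithin : ∀ᶠ ε : ℝ in 𝓝[>] 0, ε ∈ Ioi (0:ℝ))).exists
    exact ⟨μ, q3, by linarith, by linarith⟩
  -- the maximum point
  have hFl : LowerSemicontinuousOn (fun x => w x + (-((1 - l) * v x) - μ * ψ x)) (closure Ω) := by
    refine hw_lsc.add (ContinuousOn.lowerSemicontinuousOn ?_)
    have := hψc.continuousOn (s := closure Ω)
    exact (continuousOn_const.mul hvc).neg.sub (continuousOn_const.mul this)
  obtain ⟨x₀, hx₀, hmin⟩ := hFl.exists_isMinOn ⟨0, h0c⟩ hcomp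
  have hmax : ∀ y ∈ closure Ω,
      (1 - l) * v y + μ * ψ y - w y ≤ (1 - l) * v x₀ + μ * ψ x₀ - w x₀ := by
    intro y hy
    have : w x₀ + (-((1 - l) * v x₀) - μ * ψ x₀) ≤ w y + (-((1 - l) * v y) - μ * ψ y) := hmin hy
    linarith
  have hx₀r : r ≤ ‖x₀‖ := by
    by_contra hlt'
    push Not at hlt'
    have a1 := hball' x₀ hx₀ hlt'
    have a2 := hmax x₁ hx₁
    have a3 := hMv x₁ hx₁
    have a4 := hMv x₀ hx₀
    have a5 := hP x₀ hx₀
    rw [Real.norm_eq_abs] at a3 a4 a5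
    have b3 := mul_le_mul_of_nonneg_left (abs_le.1 a3).2 hl0.le
    have b4 := mul_le_mul_of_nonneg_left (abs_le.1 a4).1 hl0.le
    have b5 := mul_le_mul_of_nonneg_left (abs_le.1 a5).2 hμ0.le
    have b6 := mul_nonneg hμ0.le (hψ0 x₁)
    linarith
  have hvL : ∀ x ∈ closure Ω, ∀ y ∈ closure Ω, |v x - v y| ≤ (Kv : ℝ) * ‖x - y‖ := by
    intro x hx y hy
    have := hKv.dist_le_mul x hx y hy
    rwa [Real.dist_eq, dist_eq_norm] at this
  have hD := fun j : ℕ => doubling hdom hX Kv.2 hvL hv hvc hw_lsc hw hL hψL hψc hψd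
    (k := 1 - l) (by linarith) hμ0 hx₀ hmax (1 / ((j : ℝ) + 1)) (by positivity)
  choose x y z p₁ p₂ e hx hy hz he hsub hp₂ hbz hsup using hD
  have htend : ∀ u : ℕ → Eu n, (∀ j : ℕ, ‖u j - x₀‖ < 1 / ((j : ℝ) + 1)) →
      Tendsto u atTop (𝓝 x₀) := by
    intro u hu
    rw [tendsto_iff_norm_sub_tendsto_zero]
    exact squeeze_zero (fun _ => norm_nonneg _) (fun j => (hu j).le)
      tendsto_one_div_add_atTop_nhds_zero_nat
  have hxt := htend x hx
  have hyt := htend y hy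
  have hzt := htend z hz
  have het : Tendsto e atTop (𝓝 0) := by
    rw [tendsto_zero_iff_norm_tendsto_zero]
    exact squeeze_zero (fun _ => norm_nonneg _) (fun j => (he j).le)
      tendsto_one_div_add_atTop_nhds_zero_nat
  have hbt : ∃ B, ∀ j, ‖b (x j)‖ ≤ B := by
    have : Tendsto (fun j => ‖b (x j)‖) atTop (𝓝 ‖b x₀‖) :=
      ((hb.continuous.norm).tendsto x₀).comp hxt
    obtain ⟨B, hB⟩ := this.bddAbove_range
    exact ⟨B, fun j => hB ⟨j, rfl⟩⟩
  obtain ⟨B, hB⟩ := hbt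
  have hmem : ∀ j, (p₁ j, p₂ j) ∈ closedBall (0 : Eu n) (B / θ₀) ×ˢ closedBall (0 : Eu n) (2 * L) := by
    intro j
    refine ⟨?_, ?_⟩
    · rw [mem_closedBall_zero_iff]
      refine (p_bound hθ0 (hαm _) (hsub j)).trans ?_
      exact div_le_div_of_nonneg_right (hB j) hθ0.le
    · rw [mem_closedBall_zero_iff]
      exact hp₂ j
  obtain ⟨⟨q₁, q₂⟩, hq, φ, hφ, hlim⟩ :=
    ((isCompact_closedBall (0 : Eu n) (B / θ₀)).prod
      (isCompact_closedBall (0 : Eu n) (2 * L))).tendsto_subseq hmem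
  have hl₁ : Tendsto (fun j => p₁ (φ j)) atTop (𝓝 q₁) := (continuous_fst.tendsto _).comp hlim
  have hl₂ : Tendsto (fun j => p₂ (φ j)) atTop (𝓝 q₂) := (continuous_snd.tendsto _).comp hlim
  have hφt := hφ.tendsto_atTop
  have L1 : Ham α b x₀ q₁ ≤ 0 := by
    have : Tendsto (fun j => Ham α b (x (φ j)) (p₁ (φ j))) atTop (𝓝 (Ham α b x₀ q₁)) :=
      ham_tendsto hαc hb.continuous (hxt.comp hφt) hl₁
    exact le_of_tendsto' this fun j => hsub _
  have L2 : inner ℝ (b x₀) q₂ = g x₀ := by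
    have t1 : Tendsto (fun j => inner ℝ (b (z (φ j))) (p₂ (φ j))) atTop (𝓝 (inner ℝ (b x₀) q₂)) :=
      Tendsto.inner ((hb.continuous.tendsto x₀).comp (hzt.comp hφt)) hl₂
    have t2 : Tendsto (fun j => g (z (φ j))) atTop (𝓝 (g x₀)) :=
      (hgc.tendsto x₀).comp (hzt.comp hφt)
    simp only [hbz] at t1
    exact tendsto_nhds_unique t1 t2
  have L3 : 0 ≤ Ham α b x₀ ((1 - l) • q₁ + μ • q₂) := by
    have t1 : Tendsto (fun j => (1 - l) • p₁ (φ j) + μ • p₂ (φ j) + e (φ j)) atTop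
        (𝓝 ((1 - l) • q₁ + μ • q₂ + 0)) :=
      ((hl₁.const_smul _).add (hl₂.const_smul _)).add (het.comp hφt)
    rw [add_zero] at t1
    have : Tendsto (fun j => Ham α b (y (φ j)) ((1 - l) • p₁ (φ j) + μ • p₂ (φ j) + e (φ j))) atTop
        (𝓝 (Ham α b x₀ ((1 - l) • q₁ + μ • q₂))) :=
      ham_tendsto hαc hb.continuous (hyt.comp hφt) t1
    exact ge_of_tendsto' this fun j => hsup _
  have hq2 : ‖q₂‖ ≤ 2 * L := by
    have := hq.2
    rwa [mem_closedBall_zero_iff] at this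
  have := ham_limit hθ0 (hαm x₀) hl0 hl1 hμ0 L1 hq2 L2 (hgr x₀ hx₀ hx₀r) hμL
  linarith
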